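/- Let A be a unital C*-algebra with a faithful tracial state τ. Suppose x₁, x₂ ∈ A are selfadjoint and α > 0 satisfies ‖[x₁, e]‖₂ + ‖[x₂, e]‖₂ ≥ α ‖e‖₂ ‖1 − e‖₂ for every projection e ∈ A. Then x₁ + i x₂ does not belong to the C*-norm closure of Red(A). -/

import Mathlib

/-- The trace 2-norm `‖x‖₂ = √(Re τ(x*x))` associated with a tracial state `τ`. -/
noncomputable def traceNorm2 {A : Type*} [NormedRing A] [StarRing A] [NormedAlgebra ℂ A]
    (τ : A →ₗ[ℂ] ℂ) (x : A) : ℝ :=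
  Real.sqrt (τ (star x * x)).re

/-- The set of reducible elements of a unital *-ring: those commuting with some
nontrivial projection. -/
def RedSet (A : Type*) [Ring A] [StarRing A] : Set A :=
  {x : A | ∃ p : A, star p = p ∧ p * p = p ∧ p ≠ 0 ∧ p ≠ 1 ∧ x * p = p * x}

section Helpers

variable {A : Type*} [NormedRing A] [StarRing A] [CStarRing A] [CompleteSpace A]
    [NormedAlgebra ℂ A] [StarModule ℂ A]

/-- `‖d‖² - d*d` is of the form `c*c`. -/
lemma exists_star_mul_self_gap (d : A) :
    ∃ c : A, ((‖d‖ ^ 2 : ℝ) : ℂ) • (1 : A) - star d * d = star c * c := by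
  letI : CStarAlgebra A := {}
  letI : PartialOrder A := CStarAlgebra.spectralOrder A
  haveI : StarOrderedRing A := CStarAlgebra.spectralOrderedRing A
  have h1 : star d * d ≤ algebraMap ℝ A (‖d‖ ^ 2) := CStarAlgebra.star_mul_le_algebraMap_norm_sq
  obtain ⟨c, hc⟩ := CStarAlgebra.nonneg_iff_eq_star_mul_self.mp (sub_nonneg.mpr h1)
  refine ⟨c, ?_⟩
  rw [← hc, Algebra.algebraMap_eq_smul_one]
  congr 1

lemma trace_mul_proj_le (τ : A →ₗ[ℂ] ℂ) (hτpos : ∀ x : A, 0 ≤ (τ (star x * x)).re)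
    (d p : A) (hp : star p = p) (hpp : p * p = p) :
    (τ (star (d * p) * (d * p))).re ≤ ‖d‖ ^ 2 * (τ p).re := by
  obtain ⟨c, hc⟩ := exists_star_mul_self_gap d
  have h1 := hτpos (c * p)
  have h2 : star (c * p) * (c * p) =
      ((‖d‖ ^ 2 : ℝ) : ℂ) • p - star (d * p) * (d * p) := by
    have : star (c * p) * (c * p) = p * (star c * c) * p := by
      rw [star_mul, hp]; noncomm_ring
    rw [this, ← hc, star_mul, hp, mul_sub, sub_mul, mul_smul_comm, smul_mul_assoc, mul_one, hpp]
    noncomm_ring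
  rw [h2, map_sub, map_smul, Complex.sub_re, smul_eq_mul, Complex.re_ofReal_mul] at h1
  linarith

lemma trace_comm_le (τ : A →ₗ[ℂ] ℂ) (hτpos : ∀ x : A, 0 ≤ (τ (star x * x)).re)
    (hτtr : ∀ x y : A, τ (x * y) = τ (y * x))
    (d p : A) (hd : star d = d) (hp : star p = p) (hpp : p * p = p) :
    (τ (star (d * p - p * d) * (d * p - p * d))).re ≤ 2 * (‖d‖ ^ 2 * (τ p).re) := by
  have h1 := trace_mul_proj_le τ hτpos d p hp hpp
  have h2 := hτpos (p * d * p)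
  simp only [star_sub, star_mul, hd, hp] at h1 h2 ⊢
  have e0 : (p * d - d * p) * (d * p - p * d) =
      p * d * (d * p) - p * d * (p * d) - d * p * (d * p) + d * p * (p * d) := by noncomm_ring
  have e1 : τ (p * (d * p) * (p * d * p)) = τ (p * d * (p * d)) := by
    have : p * (d * p) * (p * d * p) = p * (d * (p * p) * d * p) := by noncomm_ring
    rw [this, hτtr, hpp]
    have : d * p * d * p * p = d * p * d * (p * p) := by noncomm_ring
    rw [this, hpp, hτtr]
    congr 1; noncomm_ring
  have e2 : τ (d * p * (d * p)) = τ (p * d * (p * d)) := by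
    have : d * p * (d * p) = d * (p * d * p) := by noncomm_ring
    rw [this, hτtr]
    congr 1; noncomm_ring
  have e3 : τ (d * p * (p * d)) = τ (p * d * (d * p)) := hτtr _ _
  rw [e1] at h2
  rw [e0, map_add, map_sub, map_sub, e2, e3]
  simp only [Complex.add_re, Complex.sub_re]
  linarith

lemma traceNorm2_comm_le (τ : A →ₗ[ℂ] ℂ) (hτ1 : τ 1 = 1)
    (hτpos : ∀ x : A, 0 ≤ (τ (star x * x)).re)
    (hτtr : ∀ x y : A, τ (x * y) = τ (y * x))
    (d p : A) (hd : star d = d) (hp : star p = p) (hpp : p * p = p) :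
    traceNorm2 τ (d * p - p * d) ≤ 2 * ‖d‖ * (traceNorm2 τ p * traceNorm2 τ (1 - p)) := by
  have hq : star (1 - p) = 1 - p := by rw [star_sub, star_one, hp]
  have hqq : (1 - p) * (1 - p) = 1 - p := by
    have : (1 - p) * (1 - p) = 1 - p - p + p * p := by noncomm_ring
    rw [this, hpp]; noncomm_ring
  have h1 := trace_comm_le τ hτpos hτtr d p hd hp hpp
  have h2 := trace_comm_le τ hτpos hτtr d (1 - p) hd hq hqq
  have e : d * (1 - p) - (1 - p) * d = -(d * p - p * d) := by noncomm_ring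
  rw [e, star_neg, neg_mul_neg, map_sub, hτ1, Complex.sub_re, Complex.one_re] at h2
  have h3 := hτpos p
  have h4 := hτpos (1 - p)
  unfold traceNorm2
  rw [hp, hpp] at h3 ⊢
  rw [hq, hqq, map_sub, hτ1, Complex.sub_re, Complex.one_re] at h4 ⊢
  apply Real.sqrt_le_iff.mpr
  refine ⟨by positivity, ?_⟩
  rw [mul_pow, mul_pow, mul_pow, Real.sq_sqrt h3, Real.sq_sqrt h4]
  nlinarith [mul_le_mul_of_nonneg_left h1 h4, mul_le_mul_of_nonneg_left h2 h3]

end Helpers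

/-- If selfadjoint `x₁, x₂` satisfy the spectral gap inequality
`‖[x₁,e]‖₂ + ‖[x₂,e]‖₂ ≥ α ‖e‖₂ ‖1 − e‖₂` over all projections `e`, then
`x₁ + i x₂` is not in the norm closure of the reducible elements. -/
theorem not_mem_closure_red_of_projection_spectral_gap
    {A : Type*} [NormedRing A] [StarRing A] [CStarRing A] [CompleteSpace A]
    [NormedAlgebra ℂ A] [StarModule ℂ A]
    (τ : A →ₗ[ℂ] ℂ)
    (hτ1 : τ 1 = 1)
    (hτpos : ∀ x : A, 0 ≤ (τ (star x * x)).re)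
    (hτreal : ∀ x : A, (τ (star x * x)).im = 0)
    (hτtr : ∀ x y : A, τ (x * y) = τ (y * x))
    (hτfaithful : ∀ x : A, τ (star x * x) = 0 → x = 0)
    (x₁ x₂ : A) (hx₁ : star x₁ = x₁) (hx₂ : star x₂ = x₂)
    (α : ℝ) (hα : 0 < α)
    (h : ∀ e : A, star e = e → e * e = e →
      α * (traceNorm2 τ e * traceNorm2 τ (1 - e)) ≤
        traceNorm2 τ (x₁ * e - e * x₁) + traceNorm2 τ (x₂ * e - e * x₂)) :
    (x₁ + Complex.I • x₂) ∉ closure (RedSet A) := by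
  intro hmem
  obtain ⟨y, ⟨p, hp, hpp, hp0, hp1, hyp⟩, hy⟩ :=
    Metric.mem_closure_iff.mp hmem (α / 4) (by positivity)
  rw [dist_eq_norm] at hy
  have hyp' : star y * p = p * star y := by
    have := congrArg star hyp
    rw [star_mul, star_mul, hp] at this
    exact this.symm
  set z := x₁ + Complex.I • x₂ - y with hz
  have hsz : star z = x₁ - Complex.I • x₂ - star y := by
    simp [hz, hx₁, hx₂, sub_eq_add_neg]
  have hnz : ‖star z‖ = ‖z‖ := norm_star z
  obtain ⟨d₁, hd₁⟩ : ∃ d : A, d = (1 / 2 : ℂ) • (z + star z) := ⟨_, rfl⟩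
  obtain ⟨d₂, hd₂⟩ : ∃ d : A, d = (-Complex.I / 2 : ℂ) • (z - star z) := ⟨_, rfl⟩
  have hs1 : star d₁ = d₁ := by
    rw [hd₁, star_smul, star_add, star_star, add_comm]; simp
  have hs2 : star d₂ = d₂ := by
    rw [hd₂, star_smul, star_sub, star_star, ← neg_sub z (star z), smul_neg, ← neg_smul]
    congr 1
    simp [neg_div]
  have hn1 : ‖d₁‖ ≤ ‖z‖ := by
    rw [hd₁, norm_smul]
    have := norm_add_le z (star z)
    norm_num
    linarith
  have hn2 : ‖d₂‖ ≤ ‖z‖ := by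
    rw [hd₂, norm_smul]
    have := norm_sub_le z (star z)
    simp
    linarith
  have hc1 : x₁ * p - p * x₁ = d₁ * p - p * d₁ := by
    have : x₁ = d₁ + (1 / 2 : ℂ) • (y + star y) := by
      rw [hd₁, hsz, hz]; module
    rw [this, add_mul, mul_add, smul_mul_assoc, mul_smul_comm, add_mul, mul_add, hyp, hyp']
    abel
  have hc2 : x₂ * p - p * x₂ = d₂ * p - p * d₂ := by
    have : x₂ = d₂ + (-Complex.I / 2 : ℂ) • (y - star y) := by
      rw [hd₂, hsz, hz, ← smul_add]
      have : x₁ + Complex.I • x₂ - y - (x₁ - Complex.I • x₂ - star y) + (y - star y)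
        = (2 * Complex.I) • x₂ := by module
      rw [this, smul_smul]
      have : -Complex.I / 2 * (2 * Complex.I) = 1 := by
        linear_combination -Complex.I_mul_I
      rw [this, one_smul]
    rw [this, add_mul, mul_add, smul_mul_assoc, mul_smul_comm, sub_mul, mul_sub, hyp, hyp']
    abel
  have hpos : ∀ x : A, x ≠ 0 → 0 < traceNorm2 τ x := by
    intro x hx
    apply Real.sqrt_pos.mpr
    refine lt_of_le_of_ne (hτpos x) fun h0 => hx (hτfaithful x ?_)
    exact Complex.ext h0.symm (hτreal x)
  have hs : 0 < traceNorm2 τ p * traceNorm2 τ (1 - p) :=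
    mul_pos (hpos p hp0) (hpos _ (sub_ne_zero.mpr (Ne.symm hp1)))
  have hh := h p hp hpp
  rw [hc1, hc2] at hh
  have b1 := traceNorm2_comm_le τ hτ1 hτpos hτtr d₁ p hs1 hp hpp
  have b2 := traceNorm2_comm_le τ hτ1 hτpos hτtr d₂ p hs2 hp hpp
  nlinarith [mul_le_mul_of_nonneg_right hn1 hs.le, mul_le_mul_of_nonneg_right hn2 hs.le,
    mul_lt_mul_of_pos_right hy hs]
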